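/- For every integer n ≥ 0: if n is even then Σ_{j=0}^{2n} Z_n^{{(j,j), b_n}} = (n+1)·Z_n, and if n is odd then 2·Σ_{j=0}^{2n} Z_n^{{(j,j), b_n}} = (2n+1)·Z_n. (Here, when n is odd and j = 2n, the set {(2n,2n), b_n} is the singleton {b_n}, and the corresponding count of perfect matchings is 0 since an odd number of vertices remains.) Equivalently, Σ_{j=0}^{2n} Z_n^{{(j,j), b_n}}/Z_n equals n+1 for n even and n+1/2 for n odd. -/

import Mathlib

open Finset

/-- Membership predicate for the vertex set `V_n` of the TSSCPP graph `G_n`: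
`0 ≤ x₁ ≤ 2n`, `x₁ ≤ x₂ ≤ 2n+1`, with `(2n,2n+1)` removed when `n` is odd. -/
def memV (n : ℕ) (x : ℤ × ℤ) : Prop :=
  0 ≤ x.1 ∧ x.1 ≤ 2*(n:ℤ) ∧ x.1 ≤ x.2 ∧ x.2 ≤ 2*(n:ℤ)+1 ∧
    ¬(n % 2 = 1 ∧ x.1 = 2*(n:ℤ) ∧ x.2 = 2*(n:ℤ)+1)

instance memV.decPred (n : ℕ) : DecidablePred (memV n) := fun x => by
  unfold memV; infer_instance

/-- The vertex set `V_n` as a finite set. -/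
noncomputable def Vfin (n : ℕ) : Finset (ℤ × ℤ) :=
  (Finset.Icc (0:ℤ) (2*(n:ℤ)) ×ˢ Finset.Icc (0:ℤ) (2*(n:ℤ)+1)).filter (memV n)

/-- The vertex set `V_n` as a set. -/
def Vset (n : ℕ) : Set (ℤ × ℤ) := {x | memV n x}

/-- The distinguished vertex `b_n = (2n, 2n+1-(n mod 2))`. -/
def bvertex (n : ℕ) : ℤ × ℤ := (2*(n:ℤ), 2*(n:ℤ)+1 - ((n % 2 : ℕ) : ℤ))

/-- Edge relation (with `x` the "lower-left" endpoint) of the TSSCPP graph `G_n`: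
horizontal edges `((x₁,x₂),(x₁+1,x₂))` for `0 ≤ x₁ ≤ 2n−1`, `x₁ ≤ x₂ ≤ 2n+1`, `x₁+x₂` odd;
vertical edges `((x₁,x₂),(x₁,x₂+1))` for `0 ≤ x₁ ≤ 2n` (`2n−1` when `n` odd), `x₁ ≤ x₂ ≤ 2n`;
diagonal edges `((x₁,x₁),(x₁+1,x₁+1))` for `0 ≤ x₁ ≤ 2n−1`. -/
def edgeRel (n : ℕ) (x y : ℤ × ℤ) : Prop :=
  (y.1 = x.1 + 1 ∧ y.2 = x.2 ∧ 0 ≤ x.1 ∧ x.1 ≤ 2*(n:ℤ) - 1 ∧ x.1 ≤ x.2 ∧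
      x.2 ≤ 2*(n:ℤ)+1 ∧ Odd (x.1 + x.2)) ∨
  (y.1 = x.1 ∧ y.2 = x.2 + 1 ∧ 0 ≤ x.1 ∧ x.1 ≤ 2*(n:ℤ) - ((n % 2 : ℕ) : ℤ) ∧
      x.1 ≤ x.2 ∧ x.2 ≤ 2*(n:ℤ)) ∨
  (x.1 = x.2 ∧ y.1 = x.1 + 1 ∧ y.2 = x.2 + 1 ∧ 0 ≤ x.1 ∧ x.1 ≤ 2*(n:ℤ) - 1)

/-- The TSSCPP graph `G_n` (as a graph on all of `ℤ × ℤ`; all of its edges join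
vertices of `V_n`). -/
def Gph (n : ℕ) : SimpleGraph (ℤ × ℤ) where
  Adj x y := edgeRel n x y ∨ edgeRel n y x
  symm := ⟨fun x y h => Or.symm h⟩
  loopless := by
    constructor
    rintro ⟨x1, x2⟩ (h | h) <;>
      rcases h with ⟨h1, h2, -⟩ | ⟨h1, h2, -⟩ | ⟨h0, h1, h2, -⟩ <;> omega

/-- `Zpm n U` = number of perfect matchings of the subgraph of `G_n` induced on `V_n \ U`. -/
noncomputable def Zpm (n : ℕ) (U : Set (ℤ × ℤ)) : ℕ :=
  Nat.card {M : ((Gph n).induce (Vset n \ U)).Subgraph // M.IsPerfectMatching}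

/-!
Expanding a partition function of weighted perfect matchings along the edges at a vertex `v` writes
it as a sum over the partner of `v`; if some vertices are already removed (monomers), the result is
a sum of partition functions in which `v` and its partner are removed as well.

Let `D j` count the matchings with monomers at `b_n` and `(j,j)`, and let `F j` and `T j` be the
counts with monomers at `b_n` and at `(j,j+1)`, respectively `(j,j+3)`, signed by the number of
edges from `(j+1,j+1)` to column `j`. Expanding `F j`, `F (j-1)`, `D (j+1)` and `D (j-1)` at `(j,j)`
gives signed counts of matchings without `(j,j)` and two of its four neighbours, and everything
cancels in `F j - F (j-1) = D (j-1) - D (j+1)`, hence `F j + D j + D (j+1) = D 0`. Expanding `F j`,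
`T j` and `T (j-1)` at `(j,j+2)` gives `F j = T j - T (j-1)`, because the signs belonging to `j` and
`j-1` are gauge equivalent once `(j,j+2)` is removed: they differ by signs attached to the vertices.
Hence `∑ F j = 0`. Summing the first relation yields `2 ∑ D j = (2n+1) D 0 + D (2n)`. Expanding
`Z_n` at `b_n` shows `Z_n = D 0`, and `D (2n)` is `Z_n` for even `n` and `0` for odd `n`.
-/

section MatchingSum

variable {α R : Type*} [CommSemiring R] {G : SimpleGraph α}

open Classical in
/-- The perfect matchings of the subgraph of `G` induced on the finite set `S`, each encoded by its
set of edges. -/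
noncomputable def perfectMatchings (G : SimpleGraph α) (S : Finset α) : Finset (Finset (Sym2 α)) :=
  {M ∈ {e ∈ S.sym2 | e ∈ G.edgeSet}.powerset | ∀ x ∈ S, ∃! y, s(x, y) ∈ M}

/-- The dimer partition function: the sum over the perfect matchings of the subgraph of `G` induced
on `S` of the product of the weights of their edges. -/
noncomputable def matchingSum (G : SimpleGraph α) (w : Sym2 α → R) (S : Finset α) : R :=
  ∑ M ∈ perfectMatchings G S, ∏ e ∈ M, w e

variable {S : Finset α} {M : Finset (Sym2 α)} {u v x y : α} {w w' : Sym2 α → R}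

lemma mem_perfectMatchings :
    M ∈ perfectMatchings G S ↔
      (∀ x y, s(x, y) ∈ M → G.Adj x y ∧ x ∈ S ∧ y ∈ S) ∧ ∀ x ∈ S, ∃! y, s(x, y) ∈ M := by
  simp only [perfectMatchings, mem_filter, mem_powerset, subset_iff, Sym2.forall,
    SimpleGraph.mem_edgeSet, mk_mem_sym2_iff]
  grind

lemma perfectMatchings_empty : perfectMatchings G (∅ : Finset α) = {∅} := by
  simp [perfectMatchings]

lemma matchingSum_empty : matchingSum G w ∅ = 1 := by
  simp [matchingSum, perfectMatchings_empty]

lemma mem_edge_unique_of_mem_perfectMatchings (hM : M ∈ perfectMatchings G S)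
    (hu : s(x, u) ∈ M) (hv : s(x, v) ∈ M) : u = v := by
  rw [mem_perfectMatchings] at hM
  exact (hM.2 x (hM.1 x u hu).2.1).unique hu hv

lemma erase_mem_perfectMatchings [DecidableEq α] (hM : M ∈ perfectMatchings G S)
    (hvu : s(v, u) ∈ M) :
    M.erase s(v, u) ∈ perfectMatchings G (S \ {v, u}) := by
  have huv : s(u, v) ∈ M := Sym2.eq_swap ▸ hvu
  have hunique {x y z : α} := mem_edge_unique_of_mem_perfectMatchings (x := x) (u := y) (v := z) hM
  rw [mem_perfectMatchings] at hM ⊢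
  simp only [mem_erase, mem_sdiff, mem_insert, mem_singleton]
  refine ⟨fun x y hxy => ?_, fun x hx => ?_⟩
  · have hyx : s(y, x) ∈ M := Sym2.eq_swap ▸ hxy.2
    grind
  · obtain ⟨y, hy, hy'⟩ := hM.2 x hx.1
    exact ⟨y, ⟨by grind, hy⟩, fun z hz => hy' z hz.2⟩

lemma notMem_of_mem_perfectMatchings_sdiff [DecidableEq α]
    (hM : M ∈ perfectMatchings G (S \ {v, u})) : s(v, x) ∉ M := fun h => by
  simpa using ((mem_perfectMatchings.1 hM).1 v x h).2.1

lemma insert_mem_perfectMatchings [DecidableEq α] (hv : v ∈ S) (hu : u ∈ S) (hvu : G.Adj v u)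
    (hM : M ∈ perfectMatchings G (S \ {v, u})) :
    insert s(v, u) M ∈ perfectMatchings G S := by
  have hvM : ∀ x, s(v, x) ∉ M := fun x => notMem_of_mem_perfectMatchings_sdiff hM
  have huM : ∀ x, s(u, x) ∉ M := fun x =>
    notMem_of_mem_perfectMatchings_sdiff (pair_comm v u ▸ hM)
  rw [mem_perfectMatchings] at hM ⊢
  simp only [mem_insert, mem_sdiff, mem_singleton] at hM ⊢
  refine ⟨fun x y hxy => ?_, fun x hx => ?_⟩
  · have := hvu.symm
    grind
  · by_cases hxv : x = v
    · exact ⟨u, by grind, by grind⟩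
    by_cases hxu : x = u
    · exact ⟨v, by grind, by grind⟩
    obtain ⟨y, hy, hy'⟩ := hM.2 x (by grind)
    exact ⟨y, by grind, by grind⟩

open Classical in
lemma matchingSum_eq_sum_adj [DecidableEq α] (hv : v ∈ S) :
    matchingSum G w S = ∑ u ∈ S with G.Adj v u, w s(v, u) * matchingSum G w (S \ {v, u}) := by
  simp only [matchingSum, mul_sum]
  rw [sum_sigma']
  symm
  refine sum_bij (fun p _ => insert s(v, p.1) p.2) ?_ ?_ ?_ ?_
  · rintro ⟨u, M⟩ h
    simp only [mem_sigma, mem_filter] at h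
    exact insert_mem_perfectMatchings hv h.1.1 h.1.2 h.2
  · rintro ⟨u, M⟩ h ⟨u', M'⟩ h' heq
    simp only [mem_sigma, mem_filter] at h h' heq
    obtain rfl : u = u' := mem_edge_unique_of_mem_perfectMatchings
      (insert_mem_perfectMatchings hv h.1.1 h.1.2 h.2) (mem_insert_self _ _)
      (heq ▸ mem_insert_self _ _)
    rw [← erase_insert (notMem_of_mem_perfectMatchings_sdiff h.2), heq,
      erase_insert (notMem_of_mem_perfectMatchings_sdiff h'.2)]
  · intro M hM
    have hM' := mem_perfectMatchings.1 hM
    obtain ⟨u, hu, -⟩ := hM'.2 v hv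
    obtain ⟨hvu, -, huS⟩ := hM'.1 v u hu
    exact ⟨⟨u, M.erase s(v, u)⟩, by simp [huS, hvu, erase_mem_perfectMatchings hM hu],
      insert_erase hu⟩
  · rintro ⟨u, M⟩ h
    rw [prod_insert (notMem_of_mem_perfectMatchings_sdiff (mem_sigma.1 h).2)]

lemma matchingSum_gauge (g : α → R)
    (h : ∀ x ∈ S, ∀ y ∈ S, G.Adj x y → w' s(x, y) = g x * g y * w s(x, y)) :
    matchingSum G w' S = (∏ x ∈ S, g x) * matchingSum G w S := by
  classical
  induction S using Finset.strongInduction with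
  | H S ih =>
    obtain rfl | ⟨v, hv⟩ := S.eq_empty_or_nonempty
    · simp [matchingSum_empty]
    rw [matchingSum_eq_sum_adj hv, matchingSum_eq_sum_adj hv, mul_sum]
    refine sum_congr rfl fun u hu => ?_
    rw [mem_filter] at hu
    have hsub : ({v, u} : Finset α) ⊆ S := by grind
    rw [ih (S \ {v, u}) (sdiff_ssubset hsub (insert_nonempty _ _)) (by grind),
      h v hv u hu.1 hu.2, ← prod_sdiff hsub, prod_pair hu.2.ne]
    ring

lemma matchingSum_eq_zero_of_odd_card (hS : Odd #S) : matchingSum G w S = 0 := by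
  classical
  induction S using Finset.strongInduction with
  | H S ih =>
    obtain ⟨v, hv⟩ := card_pos.1 hS.pos
    rw [matchingSum_eq_sum_adj hv]
    refine sum_eq_zero fun u hu => ?_
    rw [mem_filter] at hu
    have hsub : ({v, u} : Finset α) ⊆ S := by grind
    have hodd : Odd #(S \ {v, u}) := by
      rw [card_sdiff_of_subset hsub, card_pair hu.2.ne]
      exact Nat.Odd.sub_even (card_pair hu.2.ne ▸ card_le_card hsub) hS even_two
    rw [ih _ (sdiff_ssubset hsub (insert_nonempty _ _)) hodd, mul_zero]

/-- The perfect matching of an induced subgraph whose set of edges is `M`. -/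
def inducedMatching (hM : M ∈ perfectMatchings G S) : (G.induce (S : Set α)).Subgraph where
  verts := Set.univ
  Adj x y := s((x : α), (y : α)) ∈ M
  adj_sub h := ((mem_perfectMatchings.1 hM).1 _ _ h).1
  edge_vert _ := Set.mem_univ _
  symm := ⟨fun _ _ h => Sym2.eq_swap ▸ h⟩

lemma inducedMatching_isPerfectMatching (hM : M ∈ perfectMatchings G S) :
    (inducedMatching hM).IsPerfectMatching := by
  rw [SimpleGraph.Subgraph.isPerfectMatching_iff]
  intro x
  obtain ⟨y, hy, hy'⟩ := (mem_perfectMatchings.1 hM).2 x x.2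
  exact ⟨⟨y, ((mem_perfectMatchings.1 hM).1 _ _ hy).2.2⟩, hy, fun z hz => Subtype.ext (hy' z hz)⟩

lemma exists_inducedMatching_eq {P : (G.induce (S : Set α)).Subgraph} (hP : P.IsPerfectMatching) :
    ∃ M, ∃ hM : M ∈ perfectMatchings G S, inducedMatching hM = P := by
  classical
  let M : Finset (Sym2 α) := P.edgeSet.toFinset.image (Sym2.map Subtype.val)
  have hadj : ∀ x y, s(x, y) ∈ M ↔ ∃ (hx : x ∈ S) (hy : y ∈ S), P.Adj ⟨x, hx⟩ ⟨y, hy⟩ := by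
    intro x y
    simp only [M, mem_image, Set.mem_toFinset, Sym2.exists, SimpleGraph.Subgraph.mem_edgeSet,
      Sym2.map_mk, Sym2.eq_iff, Subtype.exists]
    have hsymm : ∀ a b, P.Adj a b → P.Adj b a := fun _ _ h => h.symm
    grind
  have hM : M ∈ perfectMatchings G S := by
    refine mem_perfectMatchings.2 ⟨fun x y h => ?_, fun x hx => ?_⟩
    · obtain ⟨hx, hy, h⟩ := (hadj x y).1 h
      exact ⟨P.adj_sub h, hx, hy⟩
    · obtain ⟨y, hy, hy'⟩ := SimpleGraph.Subgraph.isPerfectMatching_iff.1 hP ⟨x, hx⟩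
      refine ⟨y, (hadj _ _).2 ⟨hx, y.2, hy⟩, fun z hz => ?_⟩
      obtain ⟨_, hz, h⟩ := (hadj _ _).1 hz
      exact congrArg Subtype.val (hy' ⟨z, hz⟩ h)
  refine ⟨M, hM, SimpleGraph.Subgraph.ext (Set.eq_univ_of_forall hP.2).symm ?_⟩
  ext x y
  simp [inducedMatching, hadj]

lemma card_isPerfectMatching_induce :
    Nat.card {P : (G.induce (S : Set α)).Subgraph // P.IsPerfectMatching}
      = #(perfectMatchings G S) := by
  rw [← Nat.card_eq_finsetCard]
  refine (Nat.card_eq_of_bijective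
    (fun M => ⟨inducedMatching M.2, inducedMatching_isPerfectMatching M.2⟩) ⟨?_, ?_⟩).symm
  · rintro ⟨M, hM⟩ ⟨M', hM'⟩ h
    have hadj : ∀ x y : (S : Set α), s(x.1, y.1) ∈ M ↔ s(x.1, y.1) ∈ M' := fun x y =>
      iff_of_eq (congrArg (fun P => P.1.Adj x y) h)
    rw [mem_perfectMatchings] at hM hM'
    ext e
    induction e with
    | h x y =>
      exact ⟨fun he => (hadj ⟨x, (hM.1 x y he).2.1⟩ ⟨y, (hM.1 x y he).2.2⟩).1 he,
        fun he => (hadj ⟨x, (hM'.1 x y he).2.1⟩ ⟨y, (hM'.1 x y he).2.2⟩).2 he⟩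
  · rintro ⟨P, hP⟩
    obtain ⟨M, hM, rfl⟩ := exists_inducedMatching_eq hP
    exact ⟨⟨M, hM⟩, rfl⟩

lemma matchingSum_one : matchingSum G (1 : Sym2 α → R) S = #(perfectMatchings G S) := by
  simp [matchingSum]

end MatchingSum

section MonomerSum

variable {α R : Type*} [DecidableEq α] [CommSemiring R] {G : SimpleGraph α} {w w' : Sym2 α → R}
  {S N U : Finset α} {u v : α}

/-- The dimer partition function of `S` in the presence of monomers at the vertices of `U`, the
analogue of `Z_n^U` for weighted matchings. It vanishes by convention if a monomer lies outside
`S`. -/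
noncomputable def monomerSum (G : SimpleGraph α) (w : Sym2 α → R) (S U : Finset α) : R :=
  if U ⊆ S then matchingSum G w (S \ U) else 0

lemma monomerSum_of_subset (hU : U ⊆ S) : monomerSum G w S U = matchingSum G w (S \ U) :=
  if_pos hU

lemma monomerSum_singleton_of_notMem (hu : u ∉ S) : monomerSum G w S {u} = 0 :=
  if_neg (by simpa using hu)

lemma monomerSum_gauge (g : α → R)
    (h : ∀ x ∈ S \ U, ∀ y ∈ S \ U, G.Adj x y → w' s(x, y) = g x * g y * w s(x, y)) :
    monomerSum G w' S U = (∏ x ∈ S \ U, g x) * monomerSum G w S U := by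
  by_cases hU : U ⊆ S
  · simp only [monomerSum_of_subset hU, matchingSum_gauge g h]
  · simp [monomerSum, hU]

lemma monomerSum_congr
    (h : ∀ x ∈ S \ U, ∀ y ∈ S \ U, G.Adj x y → w' s(x, y) = w s(x, y)) :
    monomerSum G w' S U = monomerSum G w S U := by
  simpa using monomerSum_gauge (G := G) (fun _ => (1 : R)) (by simpa using h)

lemma monomerSum_eq_sum (hv : v ∈ S) (hvU : v ∉ U)
    (hN : ∀ x ∈ S, x ∈ N ↔ x ∉ U ∧ G.Adj v x) :
    monomerSum G w S U = ∑ x ∈ N, w s(v, x) * monomerSum G w S (insert v (insert x U)) := by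
  classical
  by_cases hU : U ⊆ S
  · rw [monomerSum_of_subset hU, matchingSum_eq_sum_adj (v := v) (by grind)]
    refine sum_subset_zero_on_sdiff (fun x hx => ?_) (fun x hx => ?_) fun x hx => ?_
    · grind
    · have hxS : x ∉ S := by grind
      simp [monomerSum, insert_subset_iff, hxS]
    · rw [monomerSum_of_subset (by grind), sdiff_sdiff_left]
      congr 2
      grind
  · have : ∀ x, ¬ insert v (insert x U) ⊆ S := fun x h => hU (by grind)
    simp [monomerSum, hU, this]

lemma matchingSum_eq_sum_monomerSum (hv : v ∈ S) (hN : ∀ x ∈ S, x ∈ N ↔ G.Adj v x) (hvN : v ∉ N) :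
    matchingSum G w S = ∑ x ∈ N, w s(v, x) * monomerSum G w (S.erase v) {x} := by
  have hempty : matchingSum G w S = monomerSum G w S ∅ := by simp [monomerSum]
  rw [hempty, monomerSum_eq_sum (N := N) hv (by simp) (by simpa using hN)]
  refine sum_congr rfl fun x hx => ?_
  have hxv : x ≠ v := ne_of_mem_of_not_mem hx hvN
  have hsdiff : S \ {v, x} = S.erase v \ {x} := by grind
  simp [monomerSum, insert_subset_iff, hv, hxv, hsdiff]

end MonomerSum

section Graph

variable {n : ℕ} {j x y : ℤ} {u w : ℤ × ℤ}

lemma mem_vfin : u ∈ Vfin n ↔ memV n u := by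
  simp only [Vfin, mem_filter, mem_product, mem_Icc, memV]
  omega

lemma coe_vfin : (Vfin n : Set (ℤ × ℤ)) = Vset n :=
  Set.ext fun _ => mem_vfin

lemma bvertex_of_even (hn : Even n) : bvertex n = (2 * (n : ℤ), 2 * (n : ℤ) + 1) := by
  simp [bvertex, Nat.even_iff.1 hn]

lemma bvertex_of_odd (hn : Odd n) : bvertex n = (2 * (n : ℤ), 2 * (n : ℤ)) := by
  simp [bvertex, Nat.odd_iff.1 hn]

lemma bvertex_mem_vfin : bvertex n ∈ Vfin n := by
  rw [mem_vfin]
  simp only [bvertex, memV]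
  omega

/-- The vertices of `G_n` other than `b_n`. -/
noncomputable def punctured (n : ℕ) : Finset (ℤ × ℤ) := (Vfin n).erase (bvertex n)

lemma mem_punctured : (x, y) ∈ punctured n ↔
    0 ≤ x ∧ x ≤ y ∧ y ≤ 2 * n + 1 ∧ (x < 2 * n ∨ n % 2 = 0 ∧ x = 2 * n ∧ y = 2 * n) := by
  simp only [punctured, mem_erase, mem_vfin, memV, bvertex, ne_eq, Prod.mk.injEq]
  omega

lemma adj_diag_iff (hv : (j, j) ∈ punctured n) (hw : w ∈ punctured n) :
    (Gph n).Adj (j, j) w ↔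
      w = (j, j + 1) ∨ w = (j - 1, j) ∨ w = (j + 1, j + 1) ∨ w = (j - 1, j - 1) := by
  obtain ⟨x, y⟩ := w
  simp only [mem_punctured, Gph, edgeRel, Int.odd_iff, Prod.mk.injEq] at hv hw ⊢
  constructor
  · intro h
    omega
  · rintro (⟨rfl, rfl⟩ | ⟨rfl, rfl⟩ | ⟨rfl, rfl⟩ | ⟨rfl, rfl⟩) <;> grind

lemma adj_add_one_iff (hv : (j, j + 1) ∈ punctured n) (hw : w ∈ punctured n) :
    (Gph n).Adj (j, j + 1) w ↔ w = (j, j) ∨ w = (j, j + 2) ∨ w = (j + 1, j + 1) := by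
  obtain ⟨x, y⟩ := w
  simp only [mem_punctured, Gph, edgeRel, Int.odd_iff, Prod.mk.injEq] at hv hw ⊢
  constructor
  · intro h
    omega
  · rintro (⟨rfl, rfl⟩ | ⟨rfl, rfl⟩ | ⟨rfl, rfl⟩) <;> grind

lemma adj_add_two_iff (hv : (j, j + 2) ∈ punctured n) (hw : w ∈ punctured n) :
    (Gph n).Adj (j, j + 2) w ↔ w = (j, j + 3) ∨ w = (j, j + 1) ∨ w = (j - 1, j + 2) := by
  obtain ⟨x, y⟩ := w
  simp only [mem_punctured, Gph, edgeRel, Int.odd_iff, Prod.mk.injEq] at hv hw ⊢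
  constructor
  · intro h
    omega
  · rintro (⟨rfl, rfl⟩ | ⟨rfl, rfl⟩ | ⟨rfl, rfl⟩) <;> grind

lemma card_punctured_of_odd (hn : Odd n) :
    #(punctured n) = ∑ x ∈ range (2 * n), (2 * n + 2 - x) := by
  have hn' := Nat.odd_iff.1 hn
  rw [← sum_congr rfl fun _ _ => card_range _, ← card_sigma]
  refine (card_nbij' (fun p => ((p.1 : ℤ), (p.1 + p.2 : ℤ)))
    (fun q => ⟨q.1.toNat, (q.2 - q.1).toNat⟩) ?_ ?_ ?_ ?_).symm
  · rintro ⟨x, y⟩ h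
    simp only [mem_coe, mem_sigma, mem_range, mem_punctured] at h ⊢
    omega
  · rintro ⟨x, y⟩ h
    simp only [mem_coe, mem_sigma, mem_range, mem_punctured] at h ⊢
    omega
  · rintro ⟨x, y⟩ -
    simp
  · rintro ⟨x, y⟩ h
    simp only [mem_coe, mem_punctured] at h
    simp only [Prod.mk.injEq]
    omega

lemma odd_card_punctured (hn : Odd n) : Odd #(punctured n) := by
  have hcard : #(punctured n) + n = 2 * (n * (n + 3)) := by
    have hrefl : ∑ x ∈ range (2 * n), (2 * n + 2 - x) = ∑ x ∈ range (2 * n), (x + 3) := by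
      rw [← sum_range_reflect]
      exact sum_congr rfl fun x hx => by grind
    have hid := sum_range_id_mul_two (2 * n)
    obtain ⟨k, rfl⟩ := hn
    rw [card_punctured_of_odd (by simp), hrefl, sum_add_distrib]
    simp only [sum_const, card_range, smul_eq_mul]
    rw [show 2 * (2 * k + 1) - 1 = 4 * k + 1 by omega] at hid
    linarith
  grind

end Graph

section SignedWeight

/-- The edge weights that are `-1` on the two edges joining `(j+1,j+1)` to column `j`, namely those
to `(j,j)` and `(j,j+1)`, and `1` elsewhere. The signs are chosen such that all terms of the
expansions at `(j,j)` cancel in `firstSum_sub_eq_diagSum_sub`. -/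
def signedWeight (j : ℤ) (e : Sym2 (ℤ × ℤ)) : ℤ :=
  if e = s((j, j), (j + 1, j + 1)) ∨ e = s((j, j + 1), (j + 1, j + 1)) then -1 else 1

/-- The number of perfect matchings of `G_n` with monomers at `b_n` and at the diagonal vertex
`(j,j)`. -/
noncomputable def diagSum (n : ℕ) (j : ℤ) : ℤ := monomerSum (Gph n) 1 (punctured n) {(j, j)}

/-- The signed count of the perfect matchings of `G_n` with monomers at `b_n` and `(j,j+1)`. -/
noncomputable def firstSum (n : ℕ) (j : ℤ) : ℤ :=
  monomerSum (Gph n) (signedWeight j) (punctured n) {(j, j + 1)}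

/-- The signed count of the perfect matchings of `G_n` with monomers at `b_n` and `(j,j+3)`. -/
noncomputable def thirdSum (n : ℕ) (j : ℤ) : ℤ :=
  monomerSum (Gph n) (signedWeight j) (punctured n) {(j, j + 3)}

variable {n : ℕ} {j : ℤ} {u v : ℤ × ℤ} {U : Finset (ℤ × ℤ)}

lemma signedWeight_mk :
    signedWeight j s(u, v) =
      if (u = (j, j) ∨ u = (j, j + 1)) ∧ v = (j + 1, j + 1) ∨
        u = (j + 1, j + 1) ∧ (v = (j, j) ∨ v = (j, j + 1)) then -1 else 1 := by
  simp only [signedWeight, Sym2.eq_iff]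
  exact if_congr (by tauto) rfl rfl

lemma signedWeight_eq_gauge (hj : (j, j + 2) ∈ punctured n) (hu : u ∈ punctured n \ {(j, j + 2)})
    (hv : v ∈ punctured n \ {(j, j + 2)}) (huv : (Gph n).Adj u v) :
    signedWeight j s(u, v) =
      (if u ∈ ({(j, j), (j, j + 1)} : Finset (ℤ × ℤ)) then -1 else 1) *
        (if v ∈ ({(j, j), (j, j + 1)} : Finset (ℤ × ℤ)) then -1 else 1) *
          signedWeight (j - 1) s(u, v) := by
  have hdiag : (j, j) ∈ punctured n := by rw [mem_punctured] at *; omega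
  have hone : (j, j + 1) ∈ punctured n := by rw [mem_punctured] at *; omega
  simp only [mem_sdiff, mem_singleton] at hu hv
  have hadj_diag := fun w => adj_diag_iff (w := w) hdiag
  have hadj_one := fun w => adj_add_one_iff (w := w) hone
  have hvu := huv.symm
  simp only [signedWeight_mk, mem_insert, mem_singleton, sub_add_cancel]
  grind

/-- The sign `-1` at the vertices `(j,j)` and `(j,j+1)` is a gauge transformation between the two
weights once the remaining neighbour `(j,j+2)` of these two vertices has been removed. -/
lemma monomerSum_signedWeight_eq_neg_one_pow_mul (hv : (j, j + 2) ∈ punctured n)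
    (hU : (j, j + 2) ∈ U) :
    monomerSum (Gph n) (signedWeight j) (punctured n) U =
      (-1) ^ #({(j, j), (j, j + 1)} \ U) *
        monomerSum (Gph n) (signedWeight (j - 1)) (punctured n) U := by
  rw [monomerSum_gauge (fun x => if x ∈ ({(j, j), (j, j + 1)} : Finset (ℤ × ℤ)) then -1 else 1)
    fun x hx y hy => signedWeight_eq_gauge hv (by grind) (by grind)]
  have hX : ({(j, j), (j, j + 1)} : Finset (ℤ × ℤ)) ⊆ punctured n := by
    simp only [insert_subset_iff, singleton_subset_iff, mem_punctured] at *
    omega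
  rw [prod_ite_mem, prod_const, sdiff_inter_right_comm, inter_eq_right.2 hX]

lemma monomerSum_signedWeight_of_mem (hv : (j, j + 2) ∈ punctured n) (hU : (j, j + 2) ∈ U)
    (hzero : (j, j) ∉ U) (hone : (j, j + 1) ∈ U) :
    monomerSum (Gph n) (signedWeight j) (punctured n) U =
      -monomerSum (Gph n) (signedWeight (j - 1)) (punctured n) U := by
  have hsdiff : ({(j, j), (j, j + 1)} : Finset (ℤ × ℤ)) \ U = {(j, j)} := by grind
  rw [monomerSum_signedWeight_eq_neg_one_pow_mul hv hU, hsdiff, card_singleton, pow_one,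
    neg_one_mul]

lemma monomerSum_signedWeight_of_notMem (hv : (j, j + 2) ∈ punctured n) (hU : (j, j + 2) ∈ U)
    (hzero : (j, j) ∉ U) (hone : (j, j + 1) ∉ U) :
    monomerSum (Gph n) (signedWeight j) (punctured n) U =
      monomerSum (Gph n) (signedWeight (j - 1)) (punctured n) U := by
  have hsdiff : ({(j, j), (j, j + 1)} : Finset (ℤ × ℤ)) \ U = {(j, j), (j, j + 1)} := by grind
  rw [monomerSum_signedWeight_eq_neg_one_pow_mul hv hU, hsdiff, card_pair (by simp),
    neg_one_sq, one_mul]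

lemma monomerSum_signedWeight_eq_one {G : SimpleGraph (ℤ × ℤ)} {S : Finset (ℤ × ℤ)}
    (h : (j + 1, j + 1) ∉ S \ U ∨ (j, j) ∉ S \ U ∧ (j, j + 1) ∉ S \ U) :
    monomerSum G (signedWeight j) S U = monomerSum G 1 S U :=
  monomerSum_congr fun x hx y hy _ => by
    rw [signedWeight_mk, if_neg (by grind), Pi.one_apply]

lemma firstSum_eq_thirdSum_sub (hv : (j, j + 2) ∈ punctured n) :
    firstSum n j = thirdSum n j - thirdSum n (j - 1) := by
  let T (i : ℤ) (x y : ℤ × ℤ) : ℤ :=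
    monomerSum (Gph n) (signedWeight i) (punctured n) {(j, j + 2), x, y}
  have hadj := fun w => adj_add_two_iff (w := w) hv
  have hthree : j - 1 + 3 = j + 2 := by ring
  have hfirst : firstSum n j = T j (j, j + 3) (j, j + 1) + T j (j - 1, j + 2) (j, j + 1) := by
    rw [firstSum, monomerSum_eq_sum (N := {(j, j + 3), (j - 1, j + 2)}) hv (by simp) (by grind),
      sum_pair (by simp)]
    simp [T, signedWeight_mk]
  have hthird : thirdSum n j = T j (j, j + 1) (j, j + 3) + T j (j - 1, j + 2) (j, j + 3) := by
    rw [thirdSum, monomerSum_eq_sum (N := {(j, j + 1), (j - 1, j + 2)}) hv (by simp) (by grind),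
      sum_pair (by simp)]
    simp [T, signedWeight_mk]
  have hthird' : thirdSum n (j - 1) =
      T (j - 1) (j, j + 1) (j - 1, j + 2) + T (j - 1) (j, j + 3) (j - 1, j + 2) := by
    rw [thirdSum, hthree, monomerSum_eq_sum (N := {(j, j + 1), (j, j + 3)}) hv (by grind)
      (by grind), sum_pair (by simp)]
    simp [T, signedWeight_mk]
  have hcomm : ∀ i x y, T i x y = T i y x := fun i x y => by simp only [T, pair_comm x]
  have hgauge_one : T j (j - 1, j + 2) (j, j + 1) = -T (j - 1) (j - 1, j + 2) (j, j + 1) :=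
    monomerSum_signedWeight_of_mem hv (by simp) (by grind) (by simp)
  have hgauge_three : T j (j - 1, j + 2) (j, j + 3) = T (j - 1) (j - 1, j + 2) (j, j + 3) :=
    monomerSum_signedWeight_of_notMem hv (by simp) (by grind) (by simp)
  linarith [hcomm j (j, j + 3) (j, j + 1), hcomm (j - 1) (j - 1, j + 2) (j, j + 1),
    hcomm (j - 1) (j - 1, j + 2) (j, j + 3)]

lemma firstSum_sub_eq_diagSum_sub (hv : (j, j) ∈ punctured n) :
    firstSum n j - firstSum n (j - 1) = diagSum n (j - 1) - diagSum n (j + 1) := by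
  let T (x y : ℤ × ℤ) : ℤ := monomerSum (Gph n) 1 (punctured n) {(j, j), x, y}
  have hadj := fun w => adj_diag_iff (w := w) hv
  have hne : j ≠ j - 1 ∧ j + 1 ≠ j - 1 ∧ j - 1 ≠ j + 1 := by omega
  have hfirst : firstSum n j =
      T (j - 1, j) (j, j + 1) + (-T (j + 1, j + 1) (j, j + 1) + T (j - 1, j - 1) (j, j + 1)) := by
    rw [firstSum, monomerSum_eq_sum (N := {(j - 1, j), (j + 1, j + 1), (j - 1, j - 1)}) hv
      (by grind) (by grind), sum_insert (by grind), sum_pair (by grind)]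
    simp [T, signedWeight_mk, monomerSum_signedWeight_eq_one, hne]
  have hfirst' : firstSum n (j - 1) =
      T (j, j + 1) (j - 1, j) + (T (j + 1, j + 1) (j - 1, j) + -T (j - 1, j - 1) (j - 1, j)) := by
    rw [firstSum, sub_add_cancel,
      monomerSum_eq_sum (N := {(j, j + 1), (j + 1, j + 1), (j - 1, j - 1)}) hv (by grind)
      (by grind), sum_insert (by grind), sum_pair (by grind)]
    simp [T, signedWeight_mk, monomerSum_signedWeight_eq_one, hne]
  have hdiag : diagSum n (j + 1) =
      T (j, j + 1) (j + 1, j + 1) +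
        (T (j - 1, j) (j + 1, j + 1) + T (j - 1, j - 1) (j + 1, j + 1)) := by
    rw [diagSum, monomerSum_eq_sum (N := {(j, j + 1), (j - 1, j), (j - 1, j - 1)}) hv (by grind)
      (by grind), sum_insert (by grind), sum_pair (by grind)]
    simp [T]
  have hdiag' : diagSum n (j - 1) =
      T (j, j + 1) (j - 1, j - 1) +
        (T (j - 1, j) (j - 1, j - 1) + T (j + 1, j + 1) (j - 1, j - 1)) := by
    rw [diagSum, monomerSum_eq_sum (N := {(j, j + 1), (j - 1, j), (j + 1, j + 1)}) hv (by grind)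
      (by grind), sum_insert (by grind), sum_pair (by grind)]
    simp [T]
  have hcomm : ∀ x y, T x y = T y x := fun x y => by simp only [T, pair_comm x]
  linarith [hcomm (j, j + 1) (j - 1, j), hcomm (j, j + 1) (j + 1, j + 1),
    hcomm (j, j + 1) (j - 1, j - 1), hcomm (j - 1, j) (j + 1, j + 1),
    hcomm (j - 1, j) (j - 1, j - 1), hcomm (j + 1, j + 1) (j - 1, j - 1)]

end SignedWeight

section SumRule

variable {n : ℕ} {j : ℤ}

lemma diagSum_eq_zero (hj : (j, j) ∉ punctured n) : diagSum n j = 0 :=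
  monomerSum_singleton_of_notMem hj

lemma firstSum_eq_zero (hj : (j, j + 1) ∉ punctured n) : firstSum n j = 0 :=
  monomerSum_singleton_of_notMem hj

lemma thirdSum_eq_zero (hj : (j, j + 3) ∉ punctured n) : thirdSum n j = 0 :=
  monomerSum_singleton_of_notMem hj

lemma firstSum_add_diagSum_add_diagSum {k : ℕ} (hk : ((k : ℤ), (k : ℤ)) ∈ punctured n) :
    firstSum n k + diagSum n k + diagSum n (k + 1) = diagSum n 0 := by
  induction k with
  | zero =>
    have hstep := firstSum_sub_eq_diagSum_sub hk
    have hfirst : firstSum n (-1) = 0 := firstSum_eq_zero (by rw [mem_punctured]; omega)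
    have hdiag : diagSum n (-1) = 0 := diagSum_eq_zero (by rw [mem_punctured]; omega)
    simp only [Nat.cast_zero, zero_sub, zero_add] at hstep ⊢
    linarith
  | succ k ih =>
    have hstep := firstSum_sub_eq_diagSum_sub hk
    have hprev := ih (by rw [mem_punctured] at hk ⊢; omega)
    push_cast at hstep ⊢
    rw [add_sub_cancel_right] at hstep
    linarith

lemma sum_firstSum_eq_zero : ∑ k ∈ range (2 * n), firstSum n k = 0 := by
  have hstep : ∀ k ∈ range (2 * n),
      firstSum n k = thirdSum n ((k + 1 : ℕ) - 1) - thirdSum n (k - 1) := fun k hk => by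
    rw [mem_range] at hk
    rw [Nat.cast_succ, add_sub_cancel_right,
      firstSum_eq_thirdSum_sub (by rw [mem_punctured]; omega)]
  have hleft : thirdSum n ((0 : ℕ) - 1) = 0 := thirdSum_eq_zero (by rw [mem_punctured]; omega)
  have hright : thirdSum n ((2 * n : ℕ) - 1) = 0 :=
    thirdSum_eq_zero (by rw [mem_punctured]; omega)
  rw [sum_congr rfl hstep, sum_range_sub (fun k : ℕ => thirdSum n (k - 1)), hleft, hright, sub_zero]

lemma two_mul_sum_diagSum :
    2 * ∑ k ∈ range (2 * n + 1), diagSum n k =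
      (2 * n + 1) * diagSum n 0 + diagSum n (2 * n) := by
  have hsum : ∑ k ∈ range (2 * n), (firstSum n k + diagSum n k + diagSum n (k + 1 : ℕ)) =
      ∑ _k ∈ range (2 * n), diagSum n 0 :=
    sum_congr rfl fun k hk => by
      rw [mem_range] at hk
      rw [Nat.cast_succ]
      exact firstSum_add_diagSum_add_diagSum (by rw [mem_punctured]; omega)
  simp only [sum_add_distrib, sum_firstSum_eq_zero, sum_const, card_range, nsmul_eq_mul] at hsum
  have hhead := sum_range_succ' (fun k : ℕ => diagSum n k) (2 * n)
  have hlast := sum_range_succ (fun k : ℕ => diagSum n k) (2 * n)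
  push_cast at hsum hhead hlast ⊢
  linarith

lemma diagSum_two_mul_of_even (hn : Even n) : diagSum n (2 * n) = diagSum n 0 := by
  have hn' := Nat.even_iff.1 hn
  have hrel := firstSum_add_diagSum_add_diagSum (n := n) (k := 2 * n)
    (by rw [mem_punctured]; omega)
  rw [firstSum_eq_zero (by rw [mem_punctured]; omega),
    diagSum_eq_zero (j := ((2 * n : ℕ) : ℤ) + 1) (by rw [mem_punctured]; omega)] at hrel
  simpa using hrel

lemma diagSum_two_mul_of_odd (hn : Odd n) : diagSum n (2 * n) = 0 := by
  have hn' := Nat.odd_iff.1 hn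
  exact diagSum_eq_zero (by rw [mem_punctured]; omega)

lemma cast_zpm_eq_matchingSum (U : Finset (ℤ × ℤ)) :
    (Zpm n U : ℤ) = matchingSum (Gph n) 1 (Vfin n \ U) := by
  rw [matchingSum_one, Zpm, ← coe_vfin, ← coe_sdiff, card_isPerfectMatching_induce]

lemma cast_zpm_pair_eq_diagSum {k : ℕ} (hk : k ∈ range (2 * n + 1)) :
    (Zpm n {((k : ℤ), (k : ℤ)), bvertex n} : ℤ) = diagSum n k := by
  have hU : ({((k : ℤ), (k : ℤ)), bvertex n} : Set (ℤ × ℤ)) =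
    ({((k : ℤ), (k : ℤ)), bvertex n} : Finset (ℤ × ℤ)) := by simp
  have hsdiff : Vfin n \ {((k : ℤ), (k : ℤ)), bvertex n} = punctured n \ {((k : ℤ), (k : ℤ))} := by
    grind [punctured]
  rw [hU, cast_zpm_eq_matchingSum, hsdiff]
  by_cases hmem : ((k : ℤ), (k : ℤ)) ∈ punctured n
  · rw [diagSum, monomerSum_of_subset (by simpa using hmem)]
  · have hn : Odd n := by
      rw [mem_range] at hk
      rw [mem_punctured] at hmem
      rw [Nat.odd_iff]
      omega
    rw [diagSum_eq_zero hmem, sdiff_singleton_eq_erase, erase_eq_of_notMem hmem]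
    exact matchingSum_eq_zero_of_odd_card (odd_card_punctured hn)

lemma adj_bvertex_iff_of_even (hn : Even n) {u : ℤ × ℤ} (hu : u ∈ Vfin n) :
    (Gph n).Adj (bvertex n) u ↔ u = (2 * (n : ℤ), 2 * (n : ℤ)) := by
  have hn' := Nat.even_iff.1 hn
  obtain ⟨x, y⟩ := u
  simp only [mem_vfin, memV, bvertex_of_even hn, Gph, edgeRel, Int.odd_iff, Prod.mk.injEq] at hu ⊢
  constructor
  · intro h
    omega
  · rintro ⟨rfl, rfl⟩
    grind

lemma adj_bvertex_iff_of_odd (hn : Odd n) {u : ℤ × ℤ} (hu : u ∈ Vfin n) :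
    (Gph n).Adj (bvertex n) u ↔
      u = (2 * (n : ℤ) - 1, 2 * (n : ℤ)) ∨ u = (2 * (n : ℤ) - 1, 2 * (n : ℤ) - 1) := by
  have hn' := Nat.odd_iff.1 hn
  obtain ⟨x, y⟩ := u
  simp only [mem_vfin, memV, bvertex_of_odd hn, Gph, edgeRel, Int.odd_iff, Prod.mk.injEq] at hu ⊢
  constructor
  · intro h
    omega
  · rintro (⟨rfl, rfl⟩ | ⟨rfl, rfl⟩) <;> grind

lemma matchingSum_vfin_eq_diagSum :
    matchingSum (Gph n) (1 : Sym2 (ℤ × ℤ) → ℤ) (Vfin n) = diagSum n 0 := by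
  obtain hn | hn := n.even_or_odd
  · have hadj := fun x => adj_bvertex_iff_of_even (u := x) hn
    rw [matchingSum_eq_sum_monomerSum (N := {(2 * (n : ℤ), 2 * (n : ℤ))}) bvertex_mem_vfin
      (by grind) (by simp [bvertex_of_even hn]), ← diagSum_two_mul_of_even hn]
    simp [diagSum, punctured]
  · have hadj := fun x => adj_bvertex_iff_of_odd (u := x) hn
    have hn' := Nat.odd_iff.1 hn
    have hcast : ((2 * n - 1 : ℕ) : ℤ) = 2 * n - 1 := by omega
    have hrel := firstSum_add_diagSum_add_diagSum (n := n) (k := 2 * n - 1)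
      (by rw [mem_punctured]; omega)
    rw [hcast, sub_add_cancel, diagSum_two_mul_of_odd hn, add_zero, firstSum, sub_add_cancel,
      monomerSum_signedWeight_eq_one (.inl _)] at hrel
    · rw [matchingSum_eq_sum_monomerSum
        (N := {(2 * (n : ℤ) - 1, 2 * (n : ℤ)), (2 * (n : ℤ) - 1, 2 * (n : ℤ) - 1)})
        bvertex_mem_vfin (by grind) (by grind [bvertex_of_odd]), sum_pair (by grind), ← hrel]
      simp [diagSum, punctured]
    · grind [mem_punctured]

lemma cast_zpm_empty_eq_diagSum : (Zpm n ∅ : ℤ) = diagSum n 0 := by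
  rw [← matchingSum_vfin_eq_diagSum, ← coe_empty, cast_zpm_eq_matchingSum, sdiff_empty]

end SumRule

/-- Sum rule: for every `n ≥ 0`, if `n` is even then
`Σ_{j=0}^{2n} Z_n^{{(j,j), b_n}} = (n+1)·Z_n`, and if `n` is odd then
`2·Σ_{j=0}^{2n} Z_n^{{(j,j), b_n}} = (2n+1)·Z_n`
(equivalently, `Σ_{j=0}^{2n} Z_n^{{(j,j), b_n}}/Z_n` is `n+1` for `n` even and
`n+1/2` for `n` odd). -/
theorem sum_rule (n : ℕ) :
    (Even n →
      ∑ j ∈ Finset.range (2*n+1), Zpm n {((j:ℤ), (j:ℤ)), bvertex n} = (n+1) * Zpm n ∅) ∧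
    (Odd n →
      2 * ∑ j ∈ Finset.range (2*n+1), Zpm n {((j:ℤ), (j:ℤ)), bvertex n}
        = (2*n+1) * Zpm n ∅) := by
  have hsum : 2 * ∑ k ∈ range (2 * n + 1), (Zpm n {((k : ℤ), (k : ℤ)), bvertex n} : ℤ) =
      (2 * n + 1) * Zpm n ∅ + diagSum n (2 * n) := by
    rw [sum_congr rfl fun k hk => cast_zpm_pair_eq_diagSum hk, two_mul_sum_diagSum,
      cast_zpm_empty_eq_diagSum]
  refine ⟨fun hn => ?_, fun hn => ?_⟩
  · rw [diagSum_two_mul_of_even hn, ← cast_zpm_empty_eq_diagSum] at hsum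
    zify
    linarith
  · rw [diagSum_two_mul_of_odd hn, add_zero] at hsum
    exact_mod_cast hsum
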